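/- Let B ∈ 𝔽₂ and let f : ℕ^{K_BC} → ℝ be strictly increasing in each coordinate. If a complete schedule L minimizes f((T_κ(L))_{κ∈K_BC}) among all complete schedules, then L is WDT-optimal, i.e., every configuration κ ∈ K_BC has discovery time T_κ(L) ≤ max(B)·|C| − 1. -/

import Mathlib

open scoped Classical

/-- A listening schedule over channel set `C`: a set of (channel, time-slot) pairs
such that all scanned channels belong to `C` and at most one channel is scanned
per time slot. -/
def IsSchedule (C : Finset ℕ) (L : Set (ℕ × ℕ)) : Prop :=
  (∀ p ∈ L, p.1 ∈ C) ∧ ∀ c c' t : ℕ, (c, t) ∈ L → (c', t) ∈ L → c = c'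

/-- Configuration `(c, b, δ)` is discovered at time slot `t` by the schedule `L`. -/
def DiscoveredAt (L : Set (ℕ × ℕ)) (c b δ t : ℕ) : Prop :=
  (c, t) ∈ L ∧ t % b = δ

/-- The discovery time `T_κ(L)` of configuration `κ = (c, b, δ)`: the least time slot
at which it is discovered (junk value `0` if it is never discovered). -/
noncomputable def discTime (L : Set (ℕ × ℕ)) (c b δ : ℕ) : ℕ :=
  sInf {t | DiscoveredAt L c b δ t}

/-- A schedule is complete if every configuration in `K_BC` is discovered at some slot. -/
def Complete (C B : Finset ℕ) (L : Set (ℕ × ℕ)) : Prop :=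
  ∀ c ∈ C, ∀ b ∈ B, ∀ δ < b, ∃ t, DiscoveredAt L c b δ t

/-- The set of all configurations `K_BC`, as a finite set of triples `(c, b, δ)`. -/
def KBC (C B : Finset ℕ) : Finset (ℕ × ℕ × ℕ) :=
  (C ×ˢ B ×ˢ Finset.range (B.sup id)).filter fun κ => κ.2.2 < κ.2.1

/-- The weight `P_κ = 1/(b·|B|·|C|)` of a configuration with beacon period `b`. -/
noncomputable def weight (C B : Finset ℕ) (b : ℕ) : ℝ :=
  (1 : ℝ) / ((b : ℝ) * (B.card : ℝ) * (C.card : ℝ))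

/-- Total weight of configurations discovered by `L` at some slot `≤ t` (the NDoT curve). -/
noncomputable def discSum (C B : Finset ℕ) (L : Set (ℕ × ℕ)) (t : ℕ) : ℝ :=
  ∑ κ ∈ (KBC C B).filter (fun κ => ∃ t' ≤ t, DiscoveredAt L κ.1 κ.2.1 κ.2.2 t'),
    weight C B κ.2.1

/-- The mean discovery time `MDT(L) = Σ_{κ ∈ K_BC} P_κ · T_κ(L)`. -/
noncomputable def MDT (C B : Finset ℕ) (L : Set (ℕ × ℕ)) : ℝ :=
  ∑ κ ∈ KBC C B, weight C B κ.2.1 * (discTime L κ.1 κ.2.1 κ.2.2 : ℝ)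

/-- A schedule is recursive if it is complete and, for every `b ∈ B`, every
configuration with beacon period `b` has discovery time at most `b·|C| - 1`. -/
def Recursive (C B : Finset ℕ) (L : Set (ℕ × ℕ)) : Prop :=
  Complete C B L ∧
  ∀ c ∈ C, ∀ b ∈ B, ∀ δ < b, discTime L c b δ ≤ b * C.card - 1

/-- `D(c,t)`: the expected number of new discoveries when scanning channel `c` at slot `t`,
i.e. the sum of weights of configurations `(c, b, t mod b)`, `b ∈ B`, not yet
discovered by `L` before slot `t`. -/
noncomputable def gain (C B : Finset ℕ) (L : Set (ℕ × ℕ)) (c t : ℕ) : ℝ :=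
  ∑ b ∈ B.filter (fun b => ¬ ∃ t' < t, DiscoveredAt L c b (t % b) t'),
    weight C B b

/-- A schedule is greedy if, whenever some channel has positive expected gain at slot `t`,
it scans a channel maximizing the expected gain at slot `t`. -/
def Greedy (C B : Finset ℕ) (L : Set (ℕ × ℕ)) : Prop :=
  IsSchedule C L ∧
  ∀ t : ℕ, (∃ c ∈ C, 0 < gain C B L c t) →
    ∃ c ∈ C, (c, t) ∈ L ∧ ∀ c' ∈ C, gain C B L c' t ≤ gain C B L c t

/-!
Suppose `κ = (c, b, δ)` has discovery time at least `N * |C|`, where `N` is a common multiple of the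
beacon periods. The `|C|` slots `δ + i * N` with `i < |C|` look alike to every beacon period, and
none of them scans `c`. By the pigeonhole principle some such slot scans nothing or repeats a
channel scanned at an earlier one, so it makes no first discovery. Scanning `c` there instead
delays no configuration and discovers `κ` strictly earlier, contradicting minimality.
-/

section CoordinatewiseMonotone

variable {ι β : Type*} {α : ι → Type*} [Finite ι] [DecidableEq ι] [Preorder β]
  {f : (∀ i, α i) → β}

theorem monotone_of_forall_monotone_update [∀ i, Preorder (α i)]
    (hf : ∀ v i, Monotone fun a ↦ f (Function.update v i a)) : Monotone f := by
  intro v w hvw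
  have le_piecewise (s : Finset ι) : f v ≤ f (s.piecewise w v) := by
    induction s using Finset.induction_on with
    | empty => rw [Finset.piecewise_empty]
    | insert i s his ih =>
      calc f v ≤ f (s.piecewise w v) := ih
        _ = f (Function.update (s.piecewise w v) i (v i)) := by
          rw [Function.update_eq_self_iff.mpr (Finset.piecewise_eq_of_notMem s w v his).symm]
        _ ≤ f (Function.update (s.piecewise w v) i (w i)) := hf _ i (hvw i)
        _ = f ((insert i s).piecewise w v) := by rw [Finset.piecewise_insert]
  have := Fintype.ofFinite ι
  simpa only [Finset.piecewise_univ] using le_piecewise Finset.univ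

theorem strictMono_of_forall_strictMono_update [∀ i, PartialOrder (α i)]
    (hf : ∀ v i, StrictMono fun a ↦ f (Function.update v i a)) : StrictMono f := by
  intro v w hvw
  obtain ⟨hle, i, hlt⟩ := Pi.lt_def.mp hvw
  calc f v = f (Function.update v i (v i)) := by rw [Function.update_eq_self]
    _ < f (Function.update v i (w i)) := hf v i hlt
    _ ≤ f w := monotone_of_forall_monotone_update (fun v i ↦ (hf v i).monotone)
      (update_le_iff.mpr ⟨le_rfl, fun j _ ↦ hle j⟩)

end CoordinatewiseMonotone

section Discovery

variable {C B : Finset ℕ} {L : Set (ℕ × ℕ)} {c x b δ s t N : ℕ}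

theorem mem_KBC : (c, b, δ) ∈ KBC C B ↔ c ∈ C ∧ b ∈ B ∧ δ < b := by
  simp only [KBC, Finset.mem_filter, Finset.mem_product, Finset.mem_range]
  constructor
  · rintro ⟨⟨hc, hb, -⟩, hδ⟩
    exact ⟨hc, hb, hδ⟩
  · rintro ⟨hc, hb, hδ⟩
    exact ⟨⟨hc, hb, hδ.trans_le (Finset.le_sup (f := id) hb)⟩, hδ⟩

theorem DiscoveredAt.discTime_le (h : DiscoveredAt L c b δ t) : discTime L c b δ ≤ t :=
  Nat.sInf_le h

theorem discoveredAt_discTime (h : ∃ t, DiscoveredAt L c b δ t) :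
    DiscoveredAt L c b δ (discTime L c b δ) :=
  Nat.sInf_mem h

/-- The vector `(T_κ(L))_κ` of discovery times, indexed by the configurations in `K_BC`. -/
noncomputable def discTimes (C B : Finset ℕ) (L : Set (ℕ × ℕ)) (κ : {κ // κ ∈ KBC C B}) : ℕ :=
  discTime L κ.1.1 κ.1.2.1 κ.1.2.2

/-- Slot `s` is redundant in `L` if no configuration with beacon period in `B` is discovered at `s`
for the first time. In particular, a slot in which nothing is scanned is redundant. -/
def IsRedundant (B : Finset ℕ) (L : Set (ℕ × ℕ)) (s : ℕ) : Prop :=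
  ∀ c, (c, s) ∈ L → ∀ b ∈ B, ∃ t < s, DiscoveredAt L c b (s % b) t

/-- The schedule obtained from `L` by scanning channel `c` in slot `s`, in place of whatever `L`
scans there. -/
def reassign (L : Set (ℕ × ℕ)) (s c : ℕ) : Set (ℕ × ℕ) :=
  {p ∈ L | p.2 ≠ s} ∪ {(c, s)}

theorem IsSchedule.reassign (hL : IsSchedule C L) (hc : c ∈ C) (s : ℕ) :
    IsSchedule C (reassign L s c) := by
  refine ⟨?_, ?_⟩
  · rintro p (⟨hp, -⟩ | rfl)
    · exact hL.1 p hp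
    · exact hc
  · rintro x y t (⟨hx, hxs⟩ | hx) (⟨hy, hys⟩ | hy)
    · exact hL.2 x y t hx hy
    · exact absurd (Prod.ext_iff.mp hy).2 hxs
    · exact absurd (Prod.ext_iff.mp hx).2 hys
    · exact (Prod.ext_iff.mp hx).1.trans (Prod.ext_iff.mp hy).1.symm

theorem IsRedundant.discTime_ne (hs : IsRedundant B L s) (hb : b ∈ B)
    (h : ∃ t, DiscoveredAt L x b δ t) : discTime L x b δ ≠ s := by
  rintro rfl
  obtain ⟨hmem, hmod⟩ := discoveredAt_discTime h
  obtain ⟨t, hts, ht⟩ := hs x hmem b hb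
  rw [hmod] at ht
  exact hts.not_ge ht.discTime_le

theorem IsRedundant.discoveredAt_reassign (hs : IsRedundant B L s) (c : ℕ) (hb : b ∈ B)
    (h : ∃ t, DiscoveredAt L x b δ t) :
    DiscoveredAt (reassign L s c) x b δ (discTime L x b δ) :=
  ⟨.inl ⟨(discoveredAt_discTime h).1, hs.discTime_ne hb h⟩, (discoveredAt_discTime h).2⟩

theorem IsRedundant.complete_reassign (hs : IsRedundant B L s) (hL : Complete C B L) (c : ℕ) :
    Complete C B (reassign L s c) :=
  fun x hx b hb δ hδ ↦ ⟨_, hs.discoveredAt_reassign c hb (hL x hx b hb δ hδ)⟩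

theorem IsRedundant.discTimes_reassign_le (hs : IsRedundant B L s) (hL : Complete C B L) (c : ℕ) :
    discTimes C B (reassign L s c) ≤ discTimes C B L := by
  rintro ⟨⟨x, b, δ⟩, hκ⟩
  obtain ⟨hx, hb, hδ⟩ := mem_KBC.mp hκ
  exact (hs.discoveredAt_reassign c hb (hL x hx b hb δ hδ)).discTime_le

theorem discTime_reassign_le (L : Set (ℕ × ℕ)) (c b s : ℕ) :
    discTime (reassign L s c) c b (s % b) ≤ s :=
  DiscoveredAt.discTime_le ⟨.inr rfl, rfl⟩

theorem IsRedundant.discTimes_reassign_lt (hs : IsRedundant B L s) (hL : Complete C B L)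
    (hc : c ∈ C) (hb : b ∈ B) (hδ : δ < b) (hsδ : s % b = δ) (hlt : s < discTime L c b δ) :
    discTimes C B (reassign L s c) < discTimes C B L := by
  subst hsδ
  exact Pi.lt_def.mpr ⟨hs.discTimes_reassign_le hL c, ⟨(c, b, s % b), mem_KBC.mpr ⟨hc, hb, hδ⟩⟩,
    (discTime_reassign_le L c b s).trans_lt hlt⟩

theorem exists_slot_forall_scanned_earlier (hL : ∀ p ∈ L, p.1 ∈ C) (hc : c ∈ C) (slot : ℕ → ℕ)
    (hslot : ∀ i < C.card, (c, slot i) ∉ L) :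
    ∃ i < C.card, ∀ x, (x, slot i) ∈ L → ∃ j < i, (x, slot j) ∈ L := by
  by_contra! hfresh
  choose! fresh hscanned hnew using hfresh
  have maps_to : ∀ i ∈ Finset.range C.card, fresh i ∈ C.erase c := by
    intro i hi
    have hmem := hscanned i (Finset.mem_range.mp hi)
    refine Finset.mem_erase.mpr ⟨fun h ↦ ?_, hL _ hmem⟩
    exact hslot i (Finset.mem_range.mp hi) (h ▸ hmem)
  have inj : Set.InjOn fresh (Finset.range C.card) := by
    intro i hi j hj heq
    rw [Finset.mem_coe, Finset.mem_range] at hi hj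
    rcases lt_trichotomy i j with hij | hij | hji
    · exact absurd (heq ▸ hscanned i hi) (hnew j hj i hij)
    · exact hij
    · exact absurd (heq ▸ hscanned j hj) (hnew i hi j hji)
  have card_le := Finset.card_le_card_of_injOn fresh maps_to inj
  rw [Finset.card_range] at card_le
  exact card_le.not_gt (Finset.card_erase_lt_of_mem hc)

theorem exists_isRedundant_lt_discTime (hL : ∀ p ∈ L, p.1 ∈ C) (hN : 0 < N)
    (hdvd : ∀ b ∈ B, b ∣ N) (hc : c ∈ C) (hb : b ∈ B) (hδ : δ < b)
    (hlate : N * C.card ≤ discTime L c b δ) :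
    ∃ s < discTime L c b δ, s % b = δ ∧ IsRedundant B L s := by
  have slot_lt : ∀ i < C.card, δ + i * N < discTime L c b δ := fun i hi ↦
    calc δ + i * N < N + i * N := by gcongr; exact hδ.trans_le (Nat.le_of_dvd hN (hdvd b hb))
      _ = N * (i + 1) := by ring
      _ ≤ N * C.card := by gcongr; exact hi
      _ ≤ discTime L c b δ := hlate
  have slot_mod : ∀ b' ∈ B, ∀ i, (δ + i * N) % b' = δ % b' := fun b' hb' i ↦ by
    rw [Nat.add_mod, Nat.mod_eq_zero_of_dvd ((hdvd b' hb').mul_left i), add_zero, Nat.mod_mod]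
  have slot_mod_self (i : ℕ) : (δ + i * N) % b = δ := by rw [slot_mod b hb, Nat.mod_eq_of_lt hδ]
  have not_scanned : ∀ i < C.card, (c, δ + i * N) ∉ L := fun i hi hmem ↦
    (slot_lt i hi).not_ge (DiscoveredAt.discTime_le ⟨hmem, slot_mod_self i⟩)
  obtain ⟨i, hi, hearlier⟩ := exists_slot_forall_scanned_earlier hL hc _ not_scanned
  refine ⟨δ + i * N, slot_lt i hi, slot_mod_self i, fun x hx b' hb' ↦ ?_⟩
  obtain ⟨j, hji, hj⟩ := hearlier x hx
  exact ⟨δ + j * N, by gcongr, hj, by rw [slot_mod b' hb', slot_mod b' hb']⟩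

theorem exists_discTimes_lt (hL : IsSchedule C L) (hcomp : Complete C B L) (hN : 0 < N)
    (hdvd : ∀ b ∈ B, b ∣ N) (hc : c ∈ C) (hb : b ∈ B) (hδ : δ < b)
    (hlate : N * C.card ≤ discTime L c b δ) :
    ∃ L', IsSchedule C L' ∧ Complete C B L' ∧ discTimes C B L' < discTimes C B L := by
  obtain ⟨s, hlt, hsδ, hs⟩ := exists_isRedundant_lt_discTime hL.1 hN hdvd hc hb hδ hlate
  exact ⟨reassign L s c, hL.reassign hc s, hs.complete_reassign hcomp c,
    hs.discTimes_reassign_lt hcomp hc hb hδ hsδ hlt⟩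

end Discovery

theorem stmt15_general {β : Type*} [Preorder β] {C B : Finset ℕ} {N : ℕ} (hN : 0 < N)
    (hdvd : ∀ b ∈ B, b ∣ N) {f : ({κ // κ ∈ KBC C B} → ℕ) → β}
    (hf : ∀ v κ, StrictMono fun n ↦ f (Function.update v κ n))
    {L : Set (ℕ × ℕ)} (hL : IsSchedule C L) (hcomp : Complete C B L)
    (hmin : ∀ L', IsSchedule C L' → Complete C B L' →
      ¬ f (discTimes C B L') < f (discTimes C B L)) :
    ∀ c ∈ C, ∀ b ∈ B, ∀ δ < b, discTime L c b δ < N * C.card := by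
  intro c hc b hb δ hδ
  by_contra! hlate
  obtain ⟨L', hL', hcomp', hlt⟩ := exists_discTimes_lt hL hcomp hN hdvd hc hb hδ hlate
  exact hmin L' hL' hcomp' (strictMono_of_forall_strictMono_update hf hlt)

/-- for `B ∈ 𝔽₂`, if `f : ℕ^{K_BC} → ℝ` is strictly increasing in each
coordinate and a complete schedule `L` minimizes `f((T_κ(L))_κ)` among complete
schedules, then `L` is WDT-optimal: all discovery times are at most `max(B)·|C| − 1`. -/
theorem stmt15 (C B : Finset ℕ) (hC : C.Nonempty) (hB : B.Nonempty)
    (hBpos : ∀ b ∈ B, 0 < b)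
    (hF2 : ∀ b ∈ B, b ∣ B.max' hB)
    (f : ({κ : ℕ × ℕ × ℕ // κ ∈ KBC C B} → ℕ) → ℝ)
    (hf : ∀ (v : {κ : ℕ × ℕ × ℕ // κ ∈ KBC C B} → ℕ)
        (κ : {κ : ℕ × ℕ × ℕ // κ ∈ KBC C B}) (n m : ℕ), n < m →
      f (Function.update v κ n) < f (Function.update v κ m))
    (L : Set (ℕ × ℕ)) (hL : IsSchedule C L) (hcomp : Complete C B L)
    (hmin : ∀ L' : Set (ℕ × ℕ), IsSchedule C L' → Complete C B L' →
      f (fun κ => discTime L κ.1.1 κ.1.2.1 κ.1.2.2) ≤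
        f (fun κ => discTime L' κ.1.1 κ.1.2.1 κ.1.2.2)) :
    ∀ c ∈ C, ∀ b ∈ B, ∀ δ < b, discTime L c b δ ≤ B.max' hB * C.card - 1 :=
  fun c hc b hb δ hδ ↦ Nat.le_sub_one_of_lt <|
    stmt15_general (hBpos _ (B.max'_mem hB)) hF2 (fun v κ n m ↦ hf v κ n m) hL hcomp
      (fun L' hL' hcomp' ↦ (hmin L' hL' hcomp').not_gt) c hc b hb δ hδ
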